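/- Let f, g : ℂ⁺ → ℂ⁺ be analytic self-maps of the upper half-plane such that lim_{y→+∞} f(iy)/(iy) = lim_{y→+∞} g(iy)/(iy) = 1. If f ∘ f = g ∘ g on ℂ⁺, then f = g on ℂ⁺. -/

import Mathlib

open Complex Filter Set Topology

/-- The open upper half-plane `ℂ⁺ = {z : ℂ | Im z > 0}`. -/
def UHP : Set ℂ := {z : ℂ | 0 < z.im}

/-!
By Julia's lemma, `f` and `g` do not decrease imaginary parts. Let `h = f ∘ f = g ∘ g`, take `c`
near `iy` with `y` large and put `w = h^[n] c`. As `h (iy) ~ iy`, the imaginary parts of the orbit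
of `c` grow slower than any exponential, so for every `η > 0` some `n` satisfies
`Im (h w) ≤ (1 + η) Im w`. The Schwarz–Pick lemma for `z ↦ f z - z` then says that the steps from
`w` to `f w` and from `f w` to `f (f w) = h w` nearly agree, so that `f w` is close to the midpoint
of `w` and `h w`, and so is `g w`. Hence `f w - g w` is small compared with `f w - w`.

On the other hand, `f` and `g` commute with `h`, so that `h^[n]` maps `c`, `f c`, `g c` to `w`,
`f w`, `g w`. All `h^[n]` are univalent on a fixed disc containing these three points, and Koebe
distortion bounds `‖f w - w‖` by a multiple of `‖f w - g w‖` that does not depend on `n`, unless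
`f c = g c`. So `f = g` near `iy`, and the identity theorem applies.
-/

open Metric ComplexConjugate Asymptotics

section Bloch

theorem exists_norm_deriv_le_two_mul_norm_deriv {f : ℂ → ℂ} {c : ℂ} {R : ℝ} (hR : 0 < R)
    (hf : DifferentiableOn ℂ f (ball c R)) :
    ∃ w, ∃ r > 0, closedBall w r ⊆ ball c R ∧ R * ‖deriv f c‖ ≤ 4 * r * ‖deriv f w‖ ∧
      ∀ z ∈ closedBall w r, ‖deriv f z‖ ≤ 2 * ‖deriv f w‖ := by
  have hsub : closedBall c (3 * R / 4) ⊆ ball c R := closedBall_subset_ball (by linarith)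
  have hcont : Continuous fun z : closedBall c (3 * R / 4) => ‖deriv f z‖ :=
    ((hf.deriv isOpen_ball).continuousOn.mono hsub).norm.domRestrict
  have : CompleteSpace (closedBall c (3 * R / 4)) := isClosed_closedBall.completeSpace_coe
  obtain ⟨r, hr, ⟨w, _⟩, hrR, hwc, hmax, hdouble⟩ :=
    hofer (⟨c, mem_closedBall_self (by positivity)⟩ : closedBall c (3 * R / 4)) (R / 4)
      (by positivity) hcont fun _ => norm_nonneg _
  simp only [Subtype.dist_eq] at hwc hmax hdouble
  have hball : closedBall w r ⊆ closedBall c (3 * R / 4) :=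
    closedBall_subset_closedBall' (by linarith)
  refine ⟨w, r, hr, hball.trans hsub, by linarith, fun z hz => ?_⟩
  exact hdouble ⟨z, hball hz⟩ (by rw [dist_comm]; exact hz)

theorem norm_sub_mul_norm_sub_le_of_norm_deriv_sub_le {f : ℂ → ℂ} {s : Set ℂ} {a : ℂ} {C : ℝ}
    (hs : Convex ℝ s) (hf : ∀ z ∈ s, DifferentiableAt ℂ f z)
    (hderiv : ∀ z ∈ s, ‖deriv f z - a‖ ≤ C) {z w : ℂ} (hz : z ∈ s) (hw : w ∈ s) :
    (‖a‖ - C) * ‖z - w‖ ≤ ‖f z - f w‖ := by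
  have hlin : ‖f z - a * z - (f w - a * w)‖ ≤ C * ‖z - w‖ :=
    hs.norm_image_sub_le_of_norm_hasDerivWithin_le (f := fun z => f z - a * z)
      (fun x hx => ((hf x hx).hasDerivAt.sub (hasDerivAt_const_mul a)).hasDerivWithinAt)
      hderiv hw hz
  have htri := norm_sub_le (f z - f w) (f z - a * z - (f w - a * w))
  rw [show f z - f w - (f z - a * z - (f w - a * w)) = a * (z - w) by ring, norm_mul] at htri
  linarith

theorem ball_subset_image_of_norm_deriv_le {f : ℂ → ℂ} {w : ℂ} {r : ℝ}
    (hf : DifferentiableOn ℂ f (ball w r))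
    (hbound : ∀ z ∈ ball w r, ‖deriv f z‖ ≤ 2 * ‖deriv f w‖) :
    ball (f w) (r * ‖deriv f w‖ / 24) ⊆ f '' ball w r := by
  set N := ‖deriv f w‖
  rcases le_or_gt (r * N) 0 with hrN | hrN
  · rw [ball_eq_empty.2 (by linarith)]
    exact empty_subset _
  have hN : 0 < N := (norm_nonneg _).lt_of_ne fun h => by simp [N, ← h] at hrN
  have hr : 0 < r := pos_of_mul_pos_left hrN hN.le
  have hsub : closedBall w (r / 6) ⊆ ball w r := closedBall_subset_ball (by linarith)
  have hdiff (z) (hz : z ∈ closedBall w (r / 6)) : DifferentiableAt ℂ f z :=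
    hf.differentiableAt (isOpen_ball.mem_nhds (hsub hz))
  have hmaps : MapsTo (deriv f) (ball w r) (closedBall (deriv f w) (3 * N)) := fun z hz => by
    rw [mem_closedBall_iff_norm]
    linarith [norm_sub_le (deriv f z) (deriv f w), hbound z hz]
  have hderiv (z) (hz : z ∈ closedBall w (r / 6)) : ‖deriv f z - deriv f w‖ ≤ N / 2 := by
    rw [← dist_eq_norm]
    calc dist (deriv f z) (deriv f w)
        ≤ 3 * N / r * dist z w :=
          dist_le_div_mul_dist_of_mapsTo_ball (hf.deriv isOpen_ball) hmaps (hsub hz)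
      _ ≤ 3 * N / r * (r / 6) := by gcongr; exact hz
      _ = N / 2 := by field_simp; norm_num
  have hsphere (z) (hz : z ∈ sphere w (r / 6)) : r * N / 12 ≤ ‖f z - f w‖ := by
    have hlower := norm_sub_mul_norm_sub_le_of_norm_deriv_sub_le (convex_closedBall w (r / 6))
      hdiff hderiv (sphere_subset_closedBall hz) (mem_closedBall_self (by positivity))
    rw [mem_sphere_iff_norm.1 hz] at hlower
    linarith
  have hnonconst : ∃ᶠ z in 𝓝 w, f z ≠ f w :=
    ((hdiff w (mem_closedBall_self (by positivity))).hasDerivAt.eventually_ne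
      (norm_pos_iff.1 hN)).frequently.filter_mono nhdsWithin_le_nhds
  have hcl : DiffContOnCl ℂ f (ball w (r / 6)) :=
    (hf.mono (closure_ball_subset_closedBall.trans hsub)).diffContOnCl
  have himage := hcl.ball_subset_image_closedBall (by positivity) hsphere hnonconst
  rw [show r * N / 12 / 2 = r * N / 24 by ring] at himage
  exact himage.trans (image_mono hsub)

/-- Bloch's theorem, with the constant `1 / 96`. -/
theorem exists_ball_subset_image_ball {f : ℂ → ℂ} {c : ℂ} {R : ℝ} (hR : 0 < R)
    (hf : DifferentiableOn ℂ f (ball c R)) :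
    ∃ w, ball w (R * ‖deriv f c‖ / 96) ⊆ f '' ball c R := by
  obtain ⟨w, r, _, hsub, hle, hbound⟩ := exists_norm_deriv_le_two_mul_norm_deriv hR hf
  have hsub' : ball w r ⊆ ball c R := ball_subset_closedBall.trans hsub
  refine ⟨f w, (ball_subset_ball ?_).trans <|
    (ball_subset_image_of_norm_deriv_le (hf.mono hsub') fun z hz =>
      hbound z (ball_subset_closedBall hz)).trans (image_mono hsub')⟩
  linarith

end Bloch

section Univalent

variable {E : ℂ → ℂ} {S : Set ℂ} {c : ℂ} {R : ℝ}

theorem exists_differentiableOn_eqOn_cexp_ball (hE : DifferentiableOn ℂ E (ball c R))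
    (h0 : ∀ z ∈ ball c R, E z ≠ 0) :
    ∃ L : ℂ → ℂ, DifferentiableOn ℂ L (ball c R) ∧ EqOn E (fun z => exp (L z)) (ball c R) := by
  rcases le_or_gt R 0 with hR | hR
  · exact ⟨0, by simp [ball_eq_empty.2 hR]⟩
  have hc : c ∈ ball c R := mem_ball_self hR
  obtain ⟨L, hLc, hL⟩ :=
    (((hE.deriv isOpen_ball).div hE h0).isExactOn_ball).with_val_at c (log (E c))
  have hLd : DifferentiableOn ℂ L (ball c R) := fun z hz =>
    (hL z hz).differentiableAt.differentiableWithinAt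
  have hlog : EqOn (logDeriv E) (logDeriv fun z => exp (L z)) (ball c R) := fun z hz => by
    rw [logDeriv_apply, logDeriv_apply, (hL z hz).cexp.deriv,
      mul_div_cancel_left₀ _ (exp_ne_zero _)]
    rfl
  obtain ⟨a, -, ha⟩ := (logDeriv_eqOn_iff hE hLd.cexp isOpen_ball
    (convex_ball c R).isPreconnected (fun _ _ => exp_ne_zero _) h0).1 hlog
  have ha1 : a = 1 := by
    have := ha hc
    simp only [Pi.smul_apply, smul_eq_mul, hLc, exp_log (h0 c hc)] at this
    exact (right_eq_mul₀ (h0 c hc)).1 this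
  refine ⟨L, hLd, fun z hz => ?_⟩
  simpa [ha1] using ha hz

theorem mul_norm_deriv_le_of_injOn_cexp {L : ℂ → ℂ} (hR : 0 < R)
    (hL : DifferentiableOn ℂ L (ball c R)) (hinj : InjOn (fun z => exp (L z)) (ball c R)) :
    R * ‖deriv L c‖ ≤ 96 * Real.pi := by
  by_contra! hlt
  obtain ⟨w, hw⟩ := exists_ball_subset_image_ball hR hL
  have hπ : ‖(Real.pi : ℂ) * I‖ = Real.pi := by simp [abs_of_pos Real.pi_pos]
  obtain ⟨x, hx, hLx⟩ : w + Real.pi * I ∈ L '' ball c R :=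
    hw (by rw [mem_ball_iff_norm, add_sub_cancel_left, hπ]; linarith)
  obtain ⟨y, hy, hLy⟩ : w - Real.pi * I ∈ L '' ball c R :=
    hw (by rw [mem_ball_iff_norm, sub_sub_cancel_left, norm_neg, hπ]; linarith)
  have hsub : L x - L y = 2 * Real.pi * I := by rw [hLx, hLy]; ring
  have hxy : x = y := hinj hx hy <| by
    simp only
    rw [sub_eq_iff_eq_add'.1 hsub, exp_periodic]
  rw [hxy, sub_self] at hsub
  exact two_pi_I_ne_zero hsub.symm

theorem norm_le_exp_mul_norm_of_injOn_ball {r : ℝ} (hE : DifferentiableOn ℂ E (ball c (2 * r)))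
    (hinj : InjOn E (ball c (2 * r))) (h0 : ∀ z ∈ ball c (2 * r), E z ≠ 0) {x y : ℂ}
    (hx : x ∈ ball c r) (hy : y ∈ ball c r) :
    ‖E x‖ ≤ Real.exp (192 * Real.pi) * ‖E y‖ := by
  have hr : 0 < r := pos_of_mem_ball hx
  obtain ⟨L, hL, hEL⟩ := exists_differentiableOn_eqOn_cexp_ball hE h0
  have hsub : ball c r ⊆ ball c (2 * r) := ball_subset_ball (by linarith)
  have hderiv (z) (hz : z ∈ ball c r) : ‖deriv L z‖ ≤ 96 * Real.pi / r := by
    have hz' : ball z r ⊆ ball c (2 * r) :=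
      ball_subset_ball' (by linarith [mem_ball.1 hz])
    rw [le_div_iff₀' hr]
    exact mul_norm_deriv_le_of_injOn_cexp hr (hL.mono hz') ((hinj.congr hEL).mono hz')
  have hlip : ‖L x - L y‖ ≤ 192 * Real.pi :=
    calc ‖L x - L y‖ ≤ 96 * Real.pi / r * ‖x - y‖ :=
          (convex_ball c r).norm_image_sub_le_of_norm_deriv_le (fun z hz =>
            hL.differentiableAt (isOpen_ball.mem_nhds (hsub hz))) hderiv hy hx
      _ ≤ 96 * Real.pi / r * (r + r) := by
          gcongr
          rw [← dist_eq_norm]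
          exact (dist_triangle_right x y c).trans (add_le_add (mem_ball.1 hx).le (mem_ball.1 hy).le)
      _ = 192 * Real.pi := by field_simp; norm_num
  rw [hEL (hsub hx), hEL (hsub hy), norm_exp, norm_exp, ← Real.exp_add, Real.exp_le_exp]
  have := (re_le_norm (L x - L y)).trans hlip
  rw [sub_re] at this
  linarith

theorem exists_norm_le_mul_norm_of_injOn (hSo : IsOpen S) (hSc : IsPreconnected S) {x y : ℂ}
    (hx : x ∈ S) (hy : y ∈ S) :
    ∃ C > 0, ∀ E : ℂ → ℂ, DifferentiableOn ℂ E S → InjOn E S → (∀ z ∈ S, E z ≠ 0) →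
      ‖E x‖ ≤ C * ‖E y‖ := by
  refine hSc.induction₂' (fun x y => ∃ C > 0, ∀ E : ℂ → ℂ, DifferentiableOn ℂ E S → InjOn E S →
    (∀ z ∈ S, E z ≠ 0) → ‖E x‖ ≤ C * ‖E y‖) (fun c hc => ?_) ?_ hx hy
  · obtain ⟨ρ, hρ, hρS⟩ := Metric.isOpen_iff.1 hSo c hc
    obtain ⟨r, rfl⟩ : ∃ r, ρ = 2 * r := ⟨ρ / 2, by ring⟩
    have hr : 0 < r := by linarith
    have hlocal {a b : ℂ} (ha : a ∈ ball c r) (hb : b ∈ ball c r) (E : ℂ → ℂ)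
        (hE : DifferentiableOn ℂ E S) (hinj : InjOn E S) (h0 : ∀ z ∈ S, E z ≠ 0) :
        ‖E a‖ ≤ Real.exp (192 * Real.pi) * ‖E b‖ :=
      norm_le_exp_mul_norm_of_injOn_ball (hE.mono hρS) (hinj.mono hρS)
        (fun z hz => h0 z (hρS hz)) ha hb
    filter_upwards [mem_nhdsWithin_of_mem_nhds (ball_mem_nhds c hr)] with z hz
    exact ⟨⟨_, Real.exp_pos _, hlocal (mem_ball_self hr) hz⟩,
      ⟨_, Real.exp_pos _, hlocal hz (mem_ball_self hr)⟩⟩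
  · rintro x y z - - - ⟨C, hC, hxy⟩ ⟨D, hD, hyz⟩
    refine ⟨C * D, by positivity, fun E hE hinj h0 => (hxy E hE hinj h0).trans ?_⟩
    rw [mul_assoc]
    gcongr
    exact hyz E hE hinj h0

theorem isPreconnected_ball_sdiff_singleton {V : Type*} [NormedAddCommGroup V] [NormedSpace ℝ V]
    (hV : 1 < Module.rank ℝ V) (c a : V) (r : ℝ) : IsPreconnected (ball c r \ {a}) := by
  by_cases ha : a ∈ ball c r
  · let e : OpenPartialHomeomorph V V := .univBall c r
    have htarget : e.target = ball c r :=
      OpenPartialHomeomorph.univBall_target c (pos_of_mem_ball ha)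
    have hsource (x : V) : x ∈ e.source := OpenPartialHomeomorph.univBall_source c r ▸ mem_univ x
    have himage : e '' {e.symm a}ᶜ = ball c r \ {a} := by
      ext z
      constructor
      · rintro ⟨x, hx, rfl⟩
        exact ⟨htarget ▸ e.map_source (hsource x), fun h => hx (h ▸ (e.left_inv (hsource x)).symm)⟩
      · rintro ⟨hz, hza⟩
        rw [← htarget] at hz ha
        exact ⟨e.symm z, fun h => hza (e.symm.injOn hz ha h), e.right_inv hz⟩
    rw [← himage]
    exact (isConnected_compl_singleton_of_one_lt_rank hV _).isPreconnected.image _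
      (OpenPartialHomeomorph.continuous_univBall c r).continuousOn
  · rw [sdiff_singleton_eq_self ha]
    exact (convex_ball c r).isPreconnected

/-- A qualitative form of the Koebe distortion theorem. -/
theorem exists_norm_sub_le_mul_norm_sub_of_injOn_ball {x a b : ℂ} (hx : x ∈ ball c R)
    (ha : a ∈ ball c R) (hb : b ∈ ball c R) (hab : b ≠ a) :
    ∃ C > 0, ∀ F : ℂ → ℂ, DifferentiableOn ℂ F (ball c R) → InjOn F (ball c R) →
      ‖F x - F a‖ ≤ C * ‖F b - F a‖ := by
  rcases eq_or_ne x a with rfl | hxa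
  · exact ⟨1, one_pos, fun F _ _ => by simp⟩
  obtain ⟨C, hC, hCE⟩ := exists_norm_le_mul_norm_of_injOn (isOpen_ball.sdiff isClosed_singleton)
    (isPreconnected_ball_sdiff_singleton (by simp) c a R) ⟨hx, hxa⟩ ⟨hb, hab⟩
  refine ⟨C, hC, fun F hF hinj => hCE (fun z => F z - F a) ?_ ?_ ?_⟩
  · exact (hF.mono sdiff_subset).sub_const _
  · exact fun z hz w hw hzw => hinj hz.1 hw.1 (sub_left_injective hzw)
  · exact fun z hz h => hz.2 (hinj hz.1 ha (sub_eq_zero.1 h))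

end Univalent

section HalfPlane

theorem mem_UHP {z : ℂ} : z ∈ UHP ↔ 0 < z.im := Iff.rfl

theorem isOpen_UHP : IsOpen UHP := isOpen_lt continuous_const continuous_im

theorem isPreconnected_UHP : IsPreconnected UHP := (convex_halfSpace_im_gt 0).isPreconnected

theorem I_mul_ofReal_mem_UHP {y : ℝ} (hy : 0 < y) : I * (y : ℂ) ∈ UHP := by
  simpa [mem_UHP] using hy

theorem sq_im_sub_im_le (z w : ℂ) : (z.im - w.im) ^ 2 ≤ ‖z - w‖ ^ 2 :=
  sq_le_sq' (abs_le.1 (abs_im_le_norm (z - w))).1 (im_le_norm (z - w))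

theorem sq_norm_sub_conj (z w : ℂ) : ‖z - conj w‖ ^ 2 = ‖z - w‖ ^ 2 + 4 * (z.im * w.im) := by
  rw [← normSq_eq_norm_sq, ← normSq_eq_norm_sq, normSq_apply, normSq_apply]
  simp only [sub_re, sub_im, conj_re, conj_im]
  ring

theorem sub_conj_ne_zero {z w : ℂ} (hz : z ∈ UHP) (hw : w ∈ UHP) : z - conj w ≠ 0 := fun h => by
  have him := congrArg im h
  rw [sub_im, conj_im, zero_im, sub_neg_eq_add] at him
  exact (add_pos (mem_UHP.1 hz) (mem_UHP.1 hw)).ne' him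

end HalfPlane

section SchwarzPick

/-- The Cayley transform sending `w` to `0`, a biholomorphism from `UHP` onto the unit disc. -/
noncomputable def cayley (w z : ℂ) : ℂ := (z - w) / (z - conj w)

/-- The inverse on the unit disc of the Cayley transform `cayley w`. -/
noncomputable def cayleyInv (w ζ : ℂ) : ℂ := (w - conj w * ζ) / (1 - ζ)

variable {F : ℂ → ℂ} {z w ζ : ℂ}

theorem norm_cayley_lt_one (hz : z ∈ UHP) (hw : w ∈ UHP) : ‖cayley w z‖ < 1 := by
  rw [cayley, norm_div, div_lt_one (norm_pos_iff.2 (sub_conj_ne_zero hz hw))]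
  refine lt_of_pow_lt_pow_left₀ 2 (norm_nonneg _) ?_
  linarith [sq_norm_sub_conj z w, mul_pos (mem_UHP.1 hz) (mem_UHP.1 hw)]

theorem cayleyInv_cayley (hz : z ∈ UHP) (hw : w ∈ UHP) : cayleyInv w (cayley w z) = z := by
  have hzw := sub_conj_ne_zero hz hw
  have hww := sub_conj_ne_zero hw hw
  have hden : 1 - cayley w z = (w - conj w) / (z - conj w) := by
    rw [cayley]
    field_simp
    ring
  rw [cayleyInv, hden, cayley]
  field_simp
  ring

theorem one_sub_ne_zero_of_mem_ball {A : Type*} [SeminormedRing A] [NormOneClass A] {x : A}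
    (hx : x ∈ ball 0 1) : 1 - x ≠ 0 := fun h => by
  simp [← sub_eq_zero.1 h] at hx

theorem im_cayleyInv (hζ : ζ ∈ ball (0 : ℂ) 1) :
    (cayleyInv w ζ).im = w.im * (1 - normSq ζ) / normSq (1 - ζ) := by
  have hden : normSq (1 - ζ) ≠ 0 := normSq_eq_zero.not.2 (one_sub_ne_zero_of_mem_ball hζ)
  rw [cayleyInv, div_im]
  field_simp
  simp only [normSq_apply, sub_re, sub_im, mul_re, mul_im, conj_re, conj_im, one_re, one_im]
  ring

theorem mapsTo_cayleyInv (hw : w ∈ UHP) : MapsTo (cayleyInv w) (ball 0 1) UHP := fun ζ hζ => by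
  have hnum : 0 < 1 - normSq ζ := by
    rw [normSq_eq_norm_sq, sub_pos, sq_lt_one_iff₀ (norm_nonneg _)]
    exact mem_ball_zero_iff.1 hζ
  rw [mem_UHP, im_cayleyInv hζ]
  exact div_pos (mul_pos hw hnum) (normSq_pos.2 (one_sub_ne_zero_of_mem_ball hζ))

theorem norm_cayley_le_norm_cayley (hF : DifferentiableOn ℂ F UHP) (hm : MapsTo F UHP UHP)
    (hz : z ∈ UHP) (hw : w ∈ UHP) : ‖cayley (F w) (F z)‖ ≤ ‖cayley w z‖ := by
  have hinv : DifferentiableOn ℂ (cayleyInv w) (ball 0 1) := by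
    refine DifferentiableOn.div (by fun_prop) (by fun_prop) fun ζ => one_sub_ne_zero_of_mem_ball
  have hFinv := hF.comp hinv (mapsTo_cayleyInv hw)
  have hdiff : DifferentiableOn ℂ (fun ζ => cayley (F w) (F (cayleyInv w ζ))) (ball 0 1) :=
    (hFinv.sub_const _).div (hFinv.sub_const _) fun ζ hζ =>
      sub_conj_ne_zero (hm (mapsTo_cayleyInv hw hζ)) (hm hw)
  have hmaps : MapsTo (fun ζ => cayley (F w) (F (cayleyInv w ζ))) (ball 0 1) (closedBall 0 1) :=
    fun ζ hζ => mem_closedBall_zero_iff.2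
      (norm_cayley_lt_one (hm (mapsTo_cayleyInv hw hζ)) (hm hw)).le
  have hzero : cayley (F w) (F (cayleyInv w 0)) = 0 := by simp [cayley, cayleyInv]
  have hschwarz := norm_le_norm_of_mapsTo_ball hdiff hmaps hzero (norm_cayley_lt_one hz hw)
  rwa [cayleyInv_cayley hz hw] at hschwarz

/-- The **Schwarz–Pick lemma**, cleared of denominators. -/
theorem norm_sub_sq_mul_im_le_of_mapsTo (hF : DifferentiableOn ℂ F UHP)
    (hm : MapsTo F UHP UHP) (hz : z ∈ UHP) (hw : w ∈ UHP) :
    ‖F z - F w‖ ^ 2 * (z.im * w.im) ≤ ‖z - w‖ ^ 2 * ((F z).im * (F w).im) := by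
  have hle := norm_cayley_le_norm_cayley hF hm hz hw
  rw [cayley, cayley, norm_div, norm_div,
    div_le_div_iff₀ (norm_pos_iff.2 (sub_conj_ne_zero (hm hz) (hm hw)))
      (norm_pos_iff.2 (sub_conj_ne_zero hz hw))] at hle
  have hsq := pow_le_pow_left₀ (by positivity) hle 2
  rw [mul_pow, mul_pow, sq_norm_sub_conj, sq_norm_sub_conj] at hsq
  linarith

theorem norm_sub_sq_mul_im_le (hF : DifferentiableOn ℂ F UHP) (him : ∀ z ∈ UHP, 0 ≤ (F z).im)
    (hz : z ∈ UHP) (hw : w ∈ UHP) :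
    ‖F z - F w‖ ^ 2 * (z.im * w.im) ≤ ‖z - w‖ ^ 2 * ((F z).im * (F w).im) := by
  have hshift (ε : ℝ) (hε : 0 < ε) : ‖F z - F w‖ ^ 2 * (z.im * w.im) ≤
      ‖z - w‖ ^ 2 * (((F z).im + ε) * ((F w).im + ε)) := by
    have hmaps : MapsTo (fun z => F z + ε * I) UHP UHP := fun z hz => by
      simpa [mem_UHP] using add_pos_of_nonneg_of_pos (him z hz) hε
    simpa using norm_sub_sq_mul_im_le_of_mapsTo (hF.add_const _) hmaps hz hw
  have hcont : Continuous fun ε : ℝ => ‖z - w‖ ^ 2 * (((F z).im + ε) * ((F w).im + ε)) := by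
    fun_prop
  have hlim := (hcont.tendsto 0).mono_left (nhdsWithin_le_nhds (s := Ioi 0))
  simp only [add_zero] at hlim
  exact ge_of_tendsto hlim (eventually_nhdsWithin_of_forall hshift)

/-- A Harnack inequality: the hypothesis bounds the hyperbolic distance from `z` to `w` by
`log t`. -/
theorem im_le_mul_im (hF : DifferentiableOn ℂ F UHP) (him : ∀ z ∈ UHP, 0 ≤ (F z).im)
    (hz : z ∈ UHP) (hw : w ∈ UHP) {t : ℝ} (ht : 1 ≤ t)
    (hdist : t * ‖z - w‖ ^ 2 ≤ (t - 1) ^ 2 * (z.im * w.im)) : (F z).im ≤ t * (F w).im := by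
  have hpick : ((F z).im - (F w).im) ^ 2 * (z.im * w.im) ≤ ‖z - w‖ ^ 2 * ((F z).im * (F w).im) :=
    (mul_le_mul_of_nonneg_right (sq_im_sub_im_le _ _) (mul_pos hz hw).le).trans
      (norm_sub_sq_mul_im_le hF him hz hw)
  have ha := him z hz
  have hb := him w hw
  set a := (F z).im
  set b := (F w).im
  have hquad : t * (a - b) ^ 2 ≤ (t - 1) ^ 2 * (a * b) := by
    refine le_of_mul_le_mul_right ?_ (mul_pos hz hw)
    calc t * (a - b) ^ 2 * (z.im * w.im) ≤ t * ‖z - w‖ ^ 2 * (a * b) := by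
          rw [mul_assoc, mul_assoc]
          gcongr
      _ ≤ (t - 1) ^ 2 * (z.im * w.im) * (a * b) := by gcongr
      _ = (t - 1) ^ 2 * (a * b) * (z.im * w.im) := by ring
  have hfactor : (a - t * b) * (t * a - b) ≤ 0 := by linarith
  by_contra! hlt
  have hba : b < a := (le_mul_of_one_le_left hb ht).trans_lt hlt
  have hbta : b < t * a := hba.trans_le (le_mul_of_one_le_left ha ht)
  exact (mul_pos (sub_pos.2 hlt) (sub_pos.2 hbta)).not_ge hfactor

/-- **Julia's lemma** for the boundary point `∞`. -/
theorem mul_im_le_im_of_tendsto (hF : DifferentiableOn ℂ F UHP) (him : ∀ z ∈ UHP, 0 ≤ (F z).im)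
    {a : ℝ} (hlim : Tendsto (fun y : ℝ => F (I * y) / (I * y)) atTop (𝓝 a)) (hz : z ∈ UHP) :
    a * z.im ≤ (F z).im := by
  rcases le_or_gt a 0 with ha | ha
  · exact (mul_nonpos_of_nonpos_of_nonneg ha (mem_UHP.1 hz).le).trans (him z hz)
  have hdiv (c : ℂ) : Tendsto (fun y : ℝ => c / (I * y)) atTop (𝓝 0) := by
    have : Tendsto (fun y : ℝ => c / I * ((y⁻¹ : ℝ) : ℂ)) atTop (𝓝 (c / I * ((0 : ℝ) : ℂ))) :=
      ((continuous_ofReal.tendsto 0).comp tendsto_inv_atTop_zero).const_mul _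
    simpa [div_eq_mul_inv, mul_assoc, mul_comm] using this
  have hleft : Tendsto (fun y : ℝ => ‖F z / (I * y) - F (I * y) / (I * y)‖ ^ 2 * z.im) atTop
      (𝓝 (‖(0 : ℂ) - a‖ ^ 2 * z.im)) := (((hdiv _).sub hlim).norm.pow 2).mul_const _
  have hright : Tendsto (fun y : ℝ => ‖z / (I * y) - 1‖ ^ 2 *
      ((F z).im * (F (I * y) / (I * y)).re)) atTop
      (𝓝 (‖(0 : ℂ) - 1‖ ^ 2 * ((F z).im * (a : ℂ).re))) :=
    (((hdiv z).sub_const 1).norm.pow 2).mul (((continuous_re.tendsto _).comp hlim).const_mul _)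
  have hle := le_of_tendsto_of_tendsto hleft hright <| by
    filter_upwards [eventually_gt_atTop 0] with y hy
    have hIy : I * (y : ℂ) ≠ 0 := mul_ne_zero I_ne_zero (ofReal_ne_zero.2 hy.ne')
    have hnorm : ‖I * (y : ℂ)‖ = y := by simp [abs_of_pos hy]
    have hre : (F (I * y) / (I * y)).re = (F (I * y)).im / y := by
      rw [← div_div, div_ofReal_re, div_I]
      simp
    have hpick := norm_sub_sq_mul_im_le hF him hz (I_mul_ofReal_mem_UHP hy)
    rw [I_mul_im, ofReal_re] at hpick
    rw [← sub_div, ← div_self hIy, ← sub_div, hre, norm_div, norm_div, hnorm]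
    calc (‖F z - F (I * y)‖ / y) ^ 2 * z.im
        = ‖F z - F (I * y)‖ ^ 2 * (z.im * y) / y ^ 3 := by field_simp
      _ ≤ ‖z - I * y‖ ^ 2 * ((F z).im * (F (I * y)).im) / y ^ 3 := by gcongr
      _ = (‖z - I * y‖ / y) ^ 2 * ((F z).im * ((F (I * y)).im / y)) := by field_simp
  simp only [zero_sub, norm_neg, norm_one, one_pow, one_mul, ofReal_re, norm_real,
    Real.norm_eq_abs, sq_abs] at hle
  refine le_of_mul_le_mul_left ?_ ha
  linarith

end SchwarzPick

section ImIncreasing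

variable {f g : ℂ → ℂ} {z w c : ℂ}

theorem mapsTo_UHP_of_im_le (hfi : ∀ z ∈ UHP, z.im ≤ (f z).im) : MapsTo f UHP UHP :=
  fun z hz => (mem_UHP.1 hz).trans_le (hfi z hz)

theorem norm_displacement_sub_sq_mul_im_le (hf : DifferentiableOn ℂ f UHP)
    (hfi : ∀ z ∈ UHP, z.im ≤ (f z).im) (hz : z ∈ UHP) (hw : w ∈ UHP) :
    ‖(f z - z) - (f w - w)‖ ^ 2 * (z.im * w.im) ≤
      ‖z - w‖ ^ 2 * (((f z).im - z.im) * ((f w).im - w.im)) := by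
  simpa using norm_sub_sq_mul_im_le (F := fun z => f z - z) (hf.sub differentiableOn_id)
    (fun z hz => by simpa using hfi z hz) hz hw

theorem norm_displacement_le_two_mul (hf : DifferentiableOn ℂ f UHP)
    (hfi : ∀ z ∈ UHP, z.im ≤ (f z).im) (hc : c ∈ UHP) (hz : ‖z - c‖ ≤ c.im / 2) :
    ‖f z - z‖ ≤ 2 * ‖f c - c‖ := by
  have hc0 : 0 < c.im := hc
  have hzim : c.im / 2 ≤ z.im := by
    have := (abs_le.1 ((abs_im_le_norm (z - c)).trans hz)).1
    rw [sub_im] at this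
    linarith
  have hzU : z ∈ UHP := (half_pos hc0).trans_le hzim
  have hA := im_le_norm (f z - z)
  have hB := im_le_norm (f c - c)
  have hAB := abs_norm_sub_norm_le (f z - z) (f c - c)
  have hpick := norm_displacement_sub_sq_mul_im_le hf hfi hzU hc
  rw [sub_im] at hA hB
  set A := ‖f z - z‖
  set B := ‖f c - c‖
  have hquad : (A - B) ^ 2 ≤ A * B / 2 := by
    refine le_of_mul_le_mul_right ?_ (mul_pos (half_pos hc0) hc0)
    calc (A - B) ^ 2 * (c.im / 2 * c.im)
        ≤ ‖(f z - z) - (f c - c)‖ ^ 2 * (z.im * c.im) := by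
          rw [← sq_abs (A - B)]
          gcongr
      _ ≤ ‖z - c‖ ^ 2 * (((f z).im - z.im) * ((f c).im - c.im)) := hpick
      _ ≤ (c.im / 2) ^ 2 * (A * B) := by
          have hfz : 0 ≤ (f z).im - z.im := sub_nonneg.2 (hfi z hzU)
          have hfc : 0 ≤ (f c).im - c.im := sub_nonneg.2 (hfi c hc)
          gcongr
      _ = A * B / 2 * (c.im / 2 * c.im) := by ring
  have hfactor : (A - 2 * B) * (A - B / 2) ≤ 0 := by linarith
  have hB0 : 0 ≤ B := norm_nonneg _
  by_contra! hlt
  exact hfactor.not_gt (mul_pos (by linarith) (by linarith))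

theorem norm_comp_self_sub_two_mul_displacement_le (hf : DifferentiableOn ℂ f UHP)
    (hfi : ∀ z ∈ UHP, z.im ≤ (f z).im) {η : ℝ} (hη : 0 ≤ η) (hw : w ∈ UHP)
    (hslow : (f (f w)).im ≤ (1 + η) * w.im) :
    ‖(f (f w) - w) - 2 * (f w - w)‖ ≤ η * ‖f w - w‖ := by
  have hfw := mapsTo_UHP_of_im_le hfi hw
  have hinc := hfi w hw
  have hinc' := hfi (f w) hfw
  have hdisp : ((f (f w)).im - (f w).im) * ((f w).im - w.im) ≤ (η * (f w).im) * (η * w.im) := by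
    have := mul_le_mul_of_nonneg_left hinc hη
    have : 0 ≤ w.im := (mem_UHP.1 hw).le
    gcongr <;> linarith
  refine le_of_sq_le_sq (le_of_mul_le_mul_right ?_ (mul_pos hfw hw)) (by positivity)
  calc ‖(f (f w) - w) - 2 * (f w - w)‖ ^ 2 * ((f w).im * w.im)
      = ‖(f (f w) - f w) - (f w - w)‖ ^ 2 * ((f w).im * w.im) := by congr 3; ring
    _ ≤ ‖f w - w‖ ^ 2 * (((f (f w)).im - (f w).im) * ((f w).im - w.im)) :=
        norm_displacement_sub_sq_mul_im_le hf hfi hfw hw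
    _ ≤ ‖f w - w‖ ^ 2 * ((η * (f w).im) * (η * w.im)) := by gcongr
    _ = (η * ‖f w - w‖) ^ 2 * ((f w).im * w.im) := by ring

theorem two_mul_norm_sub_le_of_comp_self_eq (hf : DifferentiableOn ℂ f UHP)
    (hfi : ∀ z ∈ UHP, z.im ≤ (f z).im)
    (hg : DifferentiableOn ℂ g UHP) (hgi : ∀ z ∈ UHP, z.im ≤ (g z).im)
    {η : ℝ} (hη : 0 ≤ η) (hw : w ∈ UHP)
    (hsq : f (f w) = g (g w)) (hslow : (f (f w)).im ≤ (1 + η) * w.im) :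
    2 * ‖g w - f w‖ ≤ η * (‖f w - w‖ + ‖g w - w‖) := by
  have hfw := norm_comp_self_sub_two_mul_displacement_le hf hfi hη hw hslow
  have hgw := norm_comp_self_sub_two_mul_displacement_le hg hgi hη hw (hsq ▸ hslow)
  rw [← hsq] at hgw
  calc 2 * ‖g w - f w‖
      = ‖((f (f w) - w) - 2 * (f w - w)) - ((f (f w) - w) - 2 * (g w - w))‖ := by
        rw [show ((f (f w) - w) - 2 * (f w - w)) - ((f (f w) - w) - 2 * (g w - w)) =
          2 * (g w - f w) by ring, norm_mul, norm_ofNat]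
    _ ≤ η * ‖f w - w‖ + η * ‖g w - w‖ := (norm_sub_le _ _).trans (add_le_add hfw hgw)
    _ = η * (‖f w - w‖ + ‖g w - w‖) := by ring

end ImIncreasing

section Iterates

variable {h : ℂ → ℂ} {z c : ℂ} {t : ℝ}

theorem im_iterate_le_pow_mul_im (hh : DifferentiableOn ℂ h UHP) (hm : MapsTo h UHP UHP)
    (hc : c ∈ UHP) (ht : 1 ≤ t)
    (hstep : t * ‖h c - c‖ ^ 2 ≤ (t - 1) ^ 2 * ((h c).im * c.im)) (n : ℕ) :
    (h^[n] c).im ≤ t ^ n * c.im :=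
  le_geom (u := fun n => (h^[n] c).im) (by linarith) n fun k _ =>
    im_le_mul_im (hh.iterate hm k) (fun _ hz => (mem_UHP.1 (hm.iterate k hz)).le) (hm hc) hc ht
      hstep

theorem exists_im_le_mul_im (hz : z ∈ UHP) (hc : c ∈ UHP) :
    ∃ T > 0, ∀ F : ℂ → ℂ, DifferentiableOn ℂ F UHP → (∀ z ∈ UHP, 0 ≤ (F z).im) →
      (F z).im ≤ T * (F c).im := by
  have hpos : 0 < z.im * c.im := mul_pos hz hc
  obtain ⟨D, hD⟩ : ∃ D, D = ‖z - c‖ ^ 2 / (z.im * c.im) := ⟨_, rfl⟩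
  have hD0 : 0 ≤ D := hD ▸ by positivity
  refine ⟨D + 2, by positivity, fun F hF him => im_le_mul_im hF him hz hc (by linarith) ?_⟩
  rw [← (eq_div_iff hpos.ne').1 hD, ← mul_assoc]
  exact mul_le_mul_of_nonneg_right (by nlinarith) hpos.le

theorem exists_im_iterate_le_mul_pow (hh : DifferentiableOn ℂ h UHP)
    (hi : ∀ z ∈ UHP, z.im ≤ (h z).im)
    (hlim : (fun y : ℝ => h (I * y)) ~[atTop] fun y => I * (y : ℂ)) (ht : 1 < t) (hz : z ∈ UHP) :
    ∃ K, ∀ n, (h^[n] z).im ≤ K * t ^ n := by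
  have hm := mapsTo_UHP_of_im_le hi
  obtain ⟨y, hsmall, hy⟩ := ((hlim.isLittleO.def (c := (t - 1) / t)
    (div_pos (sub_pos.2 ht) (by linarith))).and (eventually_gt_atTop 0)).exists
  have hc := I_mul_ofReal_mem_UHP hy
  have him : (I * (y : ℂ)).im = y := by simp
  have hnorm : ‖I * (y : ℂ)‖ = y := by simp [abs_of_pos hy]
  rw [Pi.sub_apply, hnorm] at hsmall
  have hinc := hi _ hc
  generalize I * (y : ℂ) = c at hc him hsmall hinc
  subst him
  have hstep : t * ‖h c - c‖ ^ 2 ≤ (t - 1) ^ 2 * ((h c).im * c.im) :=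
    calc t * ‖h c - c‖ ^ 2 ≤ t * ((t - 1) / t * c.im) ^ 2 := by gcongr
      _ = (t - 1) ^ 2 * (c.im * c.im) / t := by field_simp
      _ ≤ (t - 1) ^ 2 * (c.im * c.im) := div_le_self (by positivity) ht.le
      _ ≤ (t - 1) ^ 2 * ((h c).im * c.im) := by gcongr
  obtain ⟨T, hT, hcompare⟩ := exists_im_le_mul_im hz hc
  refine ⟨T * c.im, fun n => ?_⟩
  calc (h^[n] z).im ≤ T * (h^[n] c).im :=
        hcompare _ (hh.iterate hm n) fun _ hx => (mem_UHP.1 (hm.iterate n hx)).le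
    _ ≤ T * (t ^ n * c.im) := by gcongr; exact im_iterate_le_pow_mul_im hh hm hc ht.le hstep n
    _ = T * c.im * t ^ n := by ring

theorem exists_im_iterate_succ_le_mul (hh : DifferentiableOn ℂ h UHP)
    (hi : ∀ z ∈ UHP, z.im ≤ (h z).im)
    (hlim : (fun y : ℝ => h (I * y)) ~[atTop] fun y => I * (y : ℂ)) (ht : 1 < t) (hz : z ∈ UHP) :
    ∃ n, (h^[n + 1] z).im ≤ t * (h^[n] z).im := by
  by_contra! hlt
  obtain ⟨s, hs, hst⟩ := exists_between ht
  have hs0 : 0 < s := by linarith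
  have hz0 : 0 < z.im := hz
  obtain ⟨K, hle⟩ := exists_im_iterate_le_mul_pow hh hi hlim hs hz
  obtain ⟨n, hn⟩ := pow_unbounded_of_one_lt (K / z.im) ((one_lt_div hs0).2 hst)
  have hge : t ^ n * z.im ≤ (h^[n] z).im :=
    geom_le (u := fun n => (h^[n] z).im) (by linarith) n fun k _ => (hlt k).le
  rw [div_pow, div_lt_div_iff₀ hz0 (by positivity)] at hn
  exact (hn.trans_le hge).not_ge (hle n)

/-- The points that `h` moves by a small hyperbolic distance. This region is forward invariant by
the Schwarz–Pick lemma, and `h` is injective on it when `h` does not decrease imaginary parts, so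
that all iterates of `h` are injective there. -/
def smallStepSet (h : ℂ → ℂ) : Set ℂ := {z ∈ UHP | 2 * ‖h z - z‖ ^ 2 < z.im * (h z).im}

theorem mapsTo_smallStepSet (hh : DifferentiableOn ℂ h UHP) (hm : MapsTo h UHP UHP) :
    MapsTo h (smallStepSet h) (smallStepSet h) := by
  rintro z ⟨hz, hstep⟩
  have hpick := norm_sub_sq_mul_im_le_of_mapsTo hh hm (hm hz) hz
  have hstep' := mul_lt_mul_of_pos_right hstep (mul_pos (hm hz) (mem_UHP.1 (hm (hm hz))))
  refine ⟨hm hz, lt_of_mul_lt_mul_right ?_ (mul_pos hz (mem_UHP.1 (hm hz))).le⟩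
  linarith

theorem im_lt_two_mul_im_of_mem_smallStepSet (hz : z ∈ smallStepSet h) :
    (h z).im < 2 * z.im := by
  obtain ⟨hz, hstep⟩ := hz
  have hz0 : 0 < z.im := hz
  have hsq := sq_im_sub_im_le (h z) z
  by_contra! hle
  nlinarith

theorem injOn_smallStepSet (hh : DifferentiableOn ℂ h UHP) (hi : ∀ z ∈ UHP, z.im ≤ (h z).im) :
    InjOn h (smallStepSet h) := by
  intro z hz w hw heq
  have hpick := norm_displacement_sub_sq_mul_im_le hh hi hz.1 hw.1
  have hdisp : ‖(h z - z) - (h w - w)‖ = ‖z - w‖ := by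
    rw [heq, sub_sub_sub_cancel_left, norm_sub_rev]
  rw [hdisp] at hpick
  have hlt : ((h z).im - z.im) * ((h w).im - w.im) < z.im * w.im :=
    mul_lt_mul'' (by linarith [im_lt_two_mul_im_of_mem_smallStepSet hz])
      (by linarith [im_lt_two_mul_im_of_mem_smallStepSet hw])
      (sub_nonneg.2 (hi z hz.1)) (sub_nonneg.2 (hi w hw.1))
  by_contra hne
  have hpos : 0 < ‖z - w‖ ^ 2 := pow_pos (norm_pos_iff.2 (sub_ne_zero.2 hne)) 2
  exact (mul_lt_mul_of_pos_left hlt hpos).not_ge hpick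

theorem ball_subset_smallStepSet (hh : DifferentiableOn ℂ h UHP)
    (hi : ∀ z ∈ UHP, z.im ≤ (h z).im) (hc : c ∈ UHP) (hstep : ‖h c - c‖ ≤ c.im / 6) :
    ball c (c.im / 2) ⊆ smallStepSet h := fun z hz => by
  have hc0 : 0 < c.im := hc
  have hz' : ‖z - c‖ < c.im / 2 := mem_ball_iff_norm.1 hz
  have hzim : c.im / 2 < z.im := by
    have := (abs_lt.1 ((abs_im_le_norm (z - c)).trans_lt hz')).1
    rw [sub_im] at this
    linarith
  have hzU : z ∈ UHP := (half_pos hc0).trans hzim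
  have hdisp : ‖h z - z‖ ≤ c.im / 3 := by
    linarith [norm_displacement_le_two_mul hh hi hc hz'.le]
  refine ⟨hzU, ?_⟩
  calc 2 * ‖h z - z‖ ^ 2 ≤ 2 * (c.im / 3) ^ 2 := by gcongr
    _ < c.im / 2 * (c.im / 2) := by nlinarith
    _ ≤ z.im * (h z).im := by
      have hz0 : 0 ≤ z.im := (mem_UHP.1 hzU).le
      have hhz := hzim.le.trans (hi z hzU)
      gcongr

theorem injOn_iterate_ball (hh : DifferentiableOn ℂ h UHP) (hi : ∀ z ∈ UHP, z.im ≤ (h z).im)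
    (hc : c ∈ UHP) (hstep : ‖h c - c‖ ≤ c.im / 6) (n : ℕ) : InjOn h^[n] (ball c (c.im / 2)) :=
  ((injOn_smallStepSet hh hi).iterate (mapsTo_smallStepSet hh (mapsTo_UHP_of_im_le hi)) n).mono
    (ball_subset_smallStepSet hh hi hc hstep)

theorem isEquivalent_comp {f g : ℂ → ℂ} (hg : DifferentiableOn ℂ g UHP)
    (hgi : ∀ z ∈ UHP, z.im ≤ (g z).im)
    (hf : (fun y : ℝ => f (I * y)) ~[atTop] fun y => I * (y : ℂ))
    (hglim : (fun y : ℝ => g (I * y)) ~[atTop] fun y => I * (y : ℂ)) :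
    (fun y : ℝ => g (f (I * y))) ~[atTop] fun y => I * (y : ℂ) := by
  have hbound : ∀ᶠ y : ℝ in atTop,
      ‖g (f (I * y)) - f (I * y)‖ ≤ 2 * ‖g (I * y) - I * y‖ := by
    filter_upwards [hf.isLittleO.def one_half_pos, eventually_gt_atTop 0] with y hfy hy
    refine norm_displacement_le_two_mul hg hgi (I_mul_ofReal_mem_UHP hy) (hfy.trans_eq ?_)
    simp [abs_of_pos hy]
    ring
  have hdisp := (IsBigO.of_bound 2 hbound).trans_isLittleO hglim.isLittleO
  exact (hdisp.add hf.isLittleO).congr_left fun y => sub_add_sub_cancel _ _ _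

end Iterates

section CompositionSquare

theorem apply_iterate_of_mapsTo {α : Type*} {s : Set α} {g h : α → α} (hm : MapsTo h s s)
    (hcomm : ∀ z ∈ s, g (h z) = h (g z)) {z : α} (hz : z ∈ s) (n : ℕ) :
    g (h^[n] z) = h^[n] (g z) := by
  induction n with
  | zero => rfl
  | succ n ih =>
    rw [Function.iterate_succ_apply', Function.iterate_succ_apply', hcomm _ (hm.iterate n hz), ih]

theorem eq_of_comp_self_eq_of_injOn_iterate {f g : ℂ → ℂ} {c x : ℂ} {R : ℝ}
    (hf : DifferentiableOn ℂ f UHP) (hfi : ∀ z ∈ UHP, z.im ≤ (f z).im)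
    (hg : DifferentiableOn ℂ g UHP) (hgi : ∀ z ∈ UHP, z.im ≤ (g z).im)
    (hsq : ∀ z ∈ UHP, f (f z) = g (g z)) (hR : ball x R ⊆ UHP)
    (hinj : ∀ n, InjOn (f ∘ f)^[n] (ball x R))
    (hslow : ∀ t > 1, ∃ n, ((f ∘ f)^[n + 1] c).im ≤ t * ((f ∘ f)^[n] c).im)
    (hc : c ∈ ball x R) (hfc : f c ∈ ball x R) (hgc : g c ∈ ball x R) : f c = g c := by
  by_contra hne
  have hfm := mapsTo_UHP_of_im_le hfi
  have hm : MapsTo (f ∘ f) UHP UHP := hfm.comp hfm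
  obtain ⟨C, hC, hkoebe⟩ := exists_norm_sub_le_mul_norm_sub_of_injOn_ball hc hfc hgc (Ne.symm hne)
  obtain ⟨n, hn⟩ := hslow (1 + 1 / (1 + 2 * C)) (lt_add_of_pos_right _ (by positivity))
  have hdist := hkoebe _ (((hf.comp hf hfm).iterate hm n).mono hR) (hinj n)
  have hfw : f ((f ∘ f)^[n] c) = (f ∘ f)^[n] (f c) :=
    apply_iterate_of_mapsTo (g := f) hm (fun _ _ => rfl) (hR hc) n
  have hgw : g ((f ∘ f)^[n] c) = (f ∘ f)^[n] (g c) :=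
    apply_iterate_of_mapsTo hm (fun z hz => by
      simp only [Function.comp_apply, hsq z hz, hsq _ (mapsTo_UHP_of_im_le hgi hz)]) (hR hc) n
  refine hne (hinj n hfc hgc ?_)
  rw [Function.iterate_succ_apply'] at hn
  rw [← hfw, ← hgw] at hdist ⊢
  have hw : (f ∘ f)^[n] c ∈ UHP := hm.iterate n (hR hc)
  generalize (f ∘ f)^[n] c = w at *
  have hhalf := two_mul_norm_sub_le_of_comp_self_eq hf hfi hg hgi (by positivity) hw (hsq w hw) hn
  rw [div_mul_eq_mul_div, one_mul, le_div_iff₀ (by positivity)] at hhalf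
  have htri := norm_sub_le_norm_sub_add_norm_sub (g w) (f w) w
  rw [norm_sub_rev w] at hdist
  refine (sub_eq_zero.1 (norm_le_zero_iff.1 ?_)).symm
  nlinarith [norm_nonneg (g w - f w)]

theorem exists_eventually_nhds_eq_of_comp_self_eq {f g : ℂ → ℂ}
    (hf : DifferentiableOn ℂ f UHP) (hfi : ∀ z ∈ UHP, z.im ≤ (f z).im)
    (hg : DifferentiableOn ℂ g UHP) (hgi : ∀ z ∈ UHP, z.im ≤ (g z).im)
    (hflim : (fun y : ℝ => f (I * y)) ~[atTop] fun y => I * (y : ℂ))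
    (hglim : (fun y : ℝ => g (I * y)) ~[atTop] fun y => I * (y : ℂ))
    (hsq : ∀ z ∈ UHP, f (f z) = g (g z)) : ∃ c ∈ UHP, f =ᶠ[𝓝 c] g := by
  have hfm := mapsTo_UHP_of_im_le hfi
  have hh : DifferentiableOn ℂ (f ∘ f) UHP := hf.comp hf hfm
  have hhi (z) (hz : z ∈ UHP) : z.im ≤ ((f ∘ f) z).im := (hfi z hz).trans (hfi _ (hfm hz))
  have hhlim := isEquivalent_comp hf hfi hflim hflim
  obtain ⟨y, hfy, hgy, hhy, hy⟩ := ((hflim.isLittleO.def (c := 1 / 6) (by norm_num)).and <|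
    (hglim.isLittleO.def (c := 1 / 6) (by norm_num)).and <|
    (hhlim.isLittleO.def (c := 1 / 6) (by norm_num)).and <| eventually_gt_atTop 0).exists
  have hx := I_mul_ofReal_mem_UHP hy
  have hnorm : ‖I * (y : ℂ)‖ = (I * (y : ℂ)).im := by simp [abs_of_pos hy]
  simp only [Pi.sub_apply, hnorm] at hfy hgy hhy
  refine ⟨I * y, hx, ?_⟩
  generalize I * (y : ℂ) = x at *
  have hx0 : 0 < x.im := hx
  have hstep : ‖(f ∘ f) x - x‖ ≤ x.im / 6 := by rw [Function.comp_apply]; linarith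
  have hnear {u : ℂ → ℂ} (hu : DifferentiableOn ℂ u UHP) (hux : ‖u x - x‖ ≤ 1 / 6 * x.im) :
      ∀ᶠ c in 𝓝 x, u c ∈ ball x (x.im / 2) :=
    (hu.continuousOn.continuousAt (isOpen_UHP.mem_nhds hx)).eventually_mem <|
      isOpen_ball.mem_nhds (mem_ball_iff_norm.2 (by linarith))
  have hball : ball x (x.im / 2) ⊆ UHP := fun z hz =>
    (ball_subset_smallStepSet hh hhi hx hstep hz).1
  filter_upwards [hnear hf hfy, hnear hg hgy, ball_mem_nhds x (half_pos hx0)] with c hfc hgc hc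
  exact eq_of_comp_self_eq_of_injOn_iterate hf hfi hg hgi hsq hball
    (injOn_iterate_ball hh hhi hx hstep)
    (fun t ht => exists_im_iterate_succ_le_mul hh hhi hhlim ht (hball hc)) hc hfc hgc

end CompositionSquare

/-- Uniqueness of composition square roots: if `f, g : ℂ⁺ → ℂ⁺` are analytic
self-maps of the upper half-plane with `f(iy)/(iy) → 1` and `g(iy)/(iy) → 1` as
`y → +∞`, and `f ∘ f = g ∘ g` on `ℂ⁺`, then `f = g` on `ℂ⁺`. -/
theorem composition_square_root_unique
    (f g : ℂ → ℂ)
    (hfd : DifferentiableOn ℂ f UHP) (hfm : Set.MapsTo f UHP UHP)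
    (hgd : DifferentiableOn ℂ g UHP) (hgm : Set.MapsTo g UHP UHP)
    (hfl : Tendsto (fun y : ℝ => f (Complex.I * y) / (Complex.I * y)) atTop (𝓝 1))
    (hgl : Tendsto (fun y : ℝ => g (Complex.I * y) / (Complex.I * y)) atTop (𝓝 1))
    (hsq : ∀ z ∈ UHP, f (f z) = g (g z)) :
    Set.EqOn f g UHP := by
  have him_le {u : ℂ → ℂ} (hu : DifferentiableOn ℂ u UHP) (hm : MapsTo u UHP UHP)
      (hl : Tendsto (fun y : ℝ => u (I * y) / (I * y)) atTop (𝓝 1)) (z) (hz : z ∈ UHP) :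
      z.im ≤ (u z).im := by
    simpa using mul_im_le_im_of_tendsto (a := 1) hu (fun w hw => (mem_UHP.1 (hm hw)).le)
      (by simpa using hl) hz
  have hne : ∀ᶠ y : ℝ in atTop, I * (y : ℂ) ≠ 0 := by
    filter_upwards [eventually_ne_atTop 0] with y hy
    exact mul_ne_zero I_ne_zero (ofReal_ne_zero.2 hy)
  obtain ⟨c, hc, hfg⟩ := exists_eventually_nhds_eq_of_comp_self_eq
    hfd (him_le hfd hfm hfl) hgd (him_le hgd hgm hgl)
    ((isEquivalent_iff_tendsto_one hne).2 hfl) ((isEquivalent_iff_tendsto_one hne).2 hgl) hsq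
  exact (hfd.analyticOnNhd isOpen_UHP).eqOn_of_preconnected_of_eventuallyEq
    (hgd.analyticOnNhd isOpen_UHP) isPreconnected_UHP hc hfg
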